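/- Under the stated hypotheses, for all k, l ∈ ℝ, all m ∈ ℂ with Im m ≤ 0, and all t > 0, the function P(k,l,m,t) := k·û(k,l,m,t) + l·v̂(k,l,m,t) + m·ŵ(k,l,m,t) satisfies the ordinary differential equation ∂²ₜP + (λ+2μ)(k²+l²+m²)P = F_P(k,l,m,t), where F_P := −( μk·g̃₁ + μl·g̃₂ + iλ(k²+l²)·w̃ ) − m·( 2iμk·ũ + 2iμl·ṽ + (λ+2μ)·g̃₃ ) − i m²(λ+2μ)·w̃. -/

import Mathlib

open MeasureTheory Set

noncomputable section

/-- Partial derivative of a function of `(x, y, z, t)` in the `i`-th slot. -/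
def pd : Fin 4 → (ℝ → ℝ → ℝ → ℝ → ℝ) → (ℝ → ℝ → ℝ → ℝ → ℝ)
  | ⟨0, _⟩, f => fun x y z t => deriv (fun x' => f x' y z t) x
  | ⟨1, _⟩, f => fun x y z t => deriv (fun y' => f x y' z t) y
  | ⟨2, _⟩, f => fun x y z t => deriv (fun z' => f x y z' t) z
  | ⟨3, _⟩, f => fun x y z t => deriv (fun t' => f x y z t') t

/-- Smoothness of a function of `(x, y, z, t)` jointly in its four arguments. -/
def Smooth4 (f : ℝ → ℝ → ℝ → ℝ → ℝ) : Prop :=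
  ContDiff ℝ (⊤ : ℕ∞) fun p : ℝ × ℝ × ℝ × ℝ => f p.1 p.2.1 p.2.2.1 p.2.2.2

/-- `f` decays faster than any power of `1 + |x| + |y| + z` on the half space `z ≥ 0`,
uniformly for `t` in compact time intervals. -/
def Decays (f : ℝ → ℝ → ℝ → ℝ → ℝ) : Prop :=
  ∀ T : ℝ, 0 < T → ∀ n : ℕ, ∃ C : ℝ, ∀ x y z t : ℝ,
    0 ≤ z → 0 ≤ t → t ≤ T → |f x y z t| ≤ C / (1 + |x| + |y| + z) ^ n

/-- `f` and all its partial derivatives of order at most two decay. -/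
def DecaysAll (f : ℝ → ℝ → ℝ → ℝ → ℝ) : Prop :=
  Decays f ∧ (∀ i : Fin 4, Decays (pd i f)) ∧ ∀ i j : Fin 4, Decays (pd i (pd j f))

/-- The three-dimensional Lamé–Navier equations on the half space `z > 0`, `t > 0`
(with unit density). -/
def LameNavier (lam mu : ℝ) (u v w : ℝ → ℝ → ℝ → ℝ → ℝ) : Prop :=
  ∀ x y z t : ℝ, 0 < z → 0 < t →
    ((lam + 2 * mu) * pd 0 (pd 0 u) x y z t
        + (lam + mu) * (pd 0 (pd 1 v) x y z t + pd 0 (pd 2 w) x y z t)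
        + mu * (pd 1 (pd 1 u) x y z t + pd 2 (pd 2 u) x y z t)
      = pd 3 (pd 3 u) x y z t) ∧
    ((lam + 2 * mu) * pd 1 (pd 1 v) x y z t
        + (lam + mu) * (pd 1 (pd 2 w) x y z t + pd 1 (pd 0 u) x y z t)
        + mu * (pd 2 (pd 2 v) x y z t + pd 0 (pd 0 v) x y z t)
      = pd 3 (pd 3 v) x y z t) ∧
    ((lam + 2 * mu) * pd 2 (pd 2 w) x y z t
        + (lam + mu) * (pd 2 (pd 0 u) x y z t + pd 2 (pd 1 v) x y z t)
        + mu * (pd 0 (pd 0 w) x y z t + pd 1 (pd 1 w) x y z t)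
      = pd 3 (pd 3 w) x y z t)

/-- Lamb's stress boundary conditions on the surface `z = 0`. -/
def StressBC (lam mu : ℝ) (u v w : ℝ → ℝ → ℝ → ℝ → ℝ) (g₁ g₂ g₃ : ℝ → ℝ → ℝ → ℝ) : Prop :=
  ∀ x y t : ℝ, 0 < t →
    pd 2 u x y 0 t + pd 0 w x y 0 t = g₁ x y t ∧
    pd 2 v x y 0 t + pd 1 w x y 0 t = g₂ x y t ∧
    pd 2 w x y 0 t + lam / (lam + 2 * mu) * (pd 0 u x y 0 t + pd 1 v x y 0 t) = g₃ x y t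

/-- The half-space Fourier transform `∫∫∫ e^{−ikx−ily−imz} f dz dy dx`, defined for
`k, l ∈ ℝ` and `m` in the closed lower half plane. -/
def FT3 (f : ℝ → ℝ → ℝ → ℝ → ℝ) (k l : ℝ) (m : ℂ) (t : ℝ) : ℂ :=
  ∫ x : ℝ, ∫ y : ℝ, ∫ z in Ici (0 : ℝ),
    Complex.exp (-Complex.I * ((k : ℂ) * x + (l : ℂ) * y) - Complex.I * m * z) * (f x y z t : ℂ)

/-- The boundary Fourier transform `∫∫ e^{−ikx−ily} f(x, y, t) dy dx`. -/
def FT2 (f : ℝ → ℝ → ℝ → ℝ) (k l : ℝ) (t : ℝ) : ℂ :=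
  ∫ x : ℝ, ∫ y : ℝ,
    Complex.exp (-Complex.I * ((k : ℂ) * x + (l : ℂ) * y)) * (f x y t : ℂ)

/-- The forcing `F_P` of the ODE for `P = kû + lv̂ + mŵ`, built from the transforms of the
boundary data `g₁, g₂, g₃` and the boundary values of `u, v, w`. -/
def FP (lam mu : ℝ) (u v w : ℝ → ℝ → ℝ → ℝ → ℝ) (g₁ g₂ g₃ : ℝ → ℝ → ℝ → ℝ)
    (k l : ℝ) (m : ℂ) (t : ℝ) : ℂ :=
  -((mu : ℂ) * (k : ℂ) * FT2 g₁ k l t + (mu : ℂ) * (l : ℂ) * FT2 g₂ k l t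
      + Complex.I * (lam : ℂ) * ((k : ℂ) ^ 2 + (l : ℂ) ^ 2) *
        FT2 (fun x y τ => w x y 0 τ) k l t)
    - m * (2 * Complex.I * (mu : ℂ) * (k : ℂ) * FT2 (fun x y τ => u x y 0 τ) k l t
        + 2 * Complex.I * (mu : ℂ) * (l : ℂ) * FT2 (fun x y τ => v x y 0 τ) k l t
        + ((lam : ℂ) + 2 * (mu : ℂ)) * FT2 g₃ k l t)
    - Complex.I * m ^ 2 * ((lam : ℂ) + 2 * (mu : ℂ)) * FT2 (fun x y τ => w x y 0 τ) k l t

/-- The forcing `F_Q` of the ODE for `Q = mv̂ − lŵ`. -/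
def FQ (lam mu : ℝ) (u v w : ℝ → ℝ → ℝ → ℝ → ℝ) (g₁ g₂ g₃ : ℝ → ℝ → ℝ → ℝ)
    (k l : ℝ) (m : ℂ) (t : ℝ) : ℂ :=
  (((lam : ℂ) + 2 * (mu : ℂ)) * (l : ℂ) * FT2 g₃ k l t
      + Complex.I * (mu : ℂ) * (k : ℂ) * (l : ℂ) * FT2 (fun x y τ => u x y 0 τ) k l t
      + Complex.I * (mu : ℂ) * (l : ℂ) ^ 2 * FT2 (fun x y τ => v x y 0 τ) k l t)
    + m * (-((mu : ℂ)) * FT2 g₂ k l t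
        + 2 * Complex.I * (mu : ℂ) * (l : ℂ) * FT2 (fun x y τ => w x y 0 τ) k l t)
    - Complex.I * (mu : ℂ) * m ^ 2 * FT2 (fun x y τ => v x y 0 τ) k l t

/-- The forcing `F_R` of the ODE for `R = kŵ − mû`. -/
def FR (lam mu : ℝ) (u v w : ℝ → ℝ → ℝ → ℝ → ℝ) (g₁ g₂ g₃ : ℝ → ℝ → ℝ → ℝ)
    (k l : ℝ) (m : ℂ) (t : ℝ) : ℂ :=
  -(((lam : ℂ) + 2 * (mu : ℂ)) * (k : ℂ) * FT2 g₃ k l t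
      + Complex.I * (mu : ℂ) * (k : ℂ) ^ 2 * FT2 (fun x y τ => u x y 0 τ) k l t
      + Complex.I * (mu : ℂ) * (k : ℂ) * (l : ℂ) * FT2 (fun x y τ => v x y 0 τ) k l t)
    + m * ((mu : ℂ) * FT2 g₁ k l t
        - 2 * Complex.I * (mu : ℂ) * (k : ℂ) * FT2 (fun x y τ => w x y 0 τ) k l t)
    + Complex.I * (mu : ℂ) * m ^ 2 * FT2 (fun x y τ => u x y 0 τ) k l t

/-!
For `t > 0` every `x`- or `y`-derivative turns under the transform into a factor `ik` or `il`, and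
every `z`-derivative into a factor `im` at the cost of a boundary transform. The transformed
Lamé–Navier equations are therefore ordinary differential equations for `û`, `v̂`, `ŵ`, forced by
the boundary transforms of `u`, `v`, `w` and of their normal derivatives. In the combination
`kû + lv̂ + mŵ` the left-hand sides decouple into `∂²ₜ + (λ+2μ)(k²+l²+m²)`, and the normal
derivatives appear only in the stress combinations that the boundary conditions prescribe.

The half-space and the boundary transform are the transforms for two measures in `z`, Lebesgue
measure on `(0, ∞)` and the Dirac mass at `0`, so both obey the same rules for `∂ₓ` and `∂ᵧ`.
-/

section IntegrationByParts

variable {α γ E : Type*} [MeasurableSpace α] [MeasurableSpace γ] [NormedAddCommGroup E]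
  [NormedSpace ℝ E] {μ : Measure α} {ν : Measure γ}

lemma integral_prod_eq_zero_of_hasDerivAt_fst [SFinite ν] {H H' : ℝ × γ → E}
    (hderiv : ∀ x c, HasDerivAt (fun s => H (s, c)) (H' (x, c)) x)
    (hH : Integrable H (volume.prod ν)) (hH' : Integrable H' (volume.prod ν)) :
    ∫ p, H' p ∂(volume.prod ν) = 0 := by
  rw [integral_prod_symm _ hH']
  refine integral_eq_zero_of_ae ?_
  filter_upwards [hH.prod_left_ae, hH'.prod_left_ae] with c hc hc'
  exact integral_eq_zero_of_hasDerivAt_of_integrable (fun x => hderiv x c) hc' hc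

lemma integral_prod_prod_eq_zero_of_hasDerivAt_mid [SFinite μ] [SFinite ν] {H H' : α × ℝ × γ → E}
    (hderiv : ∀ a y c, HasDerivAt (fun s => H (a, s, c)) (H' (a, y, c)) y)
    (hH : Integrable H (μ.prod (volume.prod ν))) (hH' : Integrable H' (μ.prod (volume.prod ν))) :
    ∫ p, H' p ∂(μ.prod (volume.prod ν)) = 0 := by
  rw [integral_prod _ hH']
  refine integral_eq_zero_of_ae ?_
  filter_upwards [hH.prod_right_ae, hH'.prod_right_ae] with a ha ha'
  exact integral_prod_eq_zero_of_hasDerivAt_fst (fun y c => hderiv a y c) ha ha'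

lemma integral_prod_Ioi_of_hasDerivAt_snd [CompleteSpace E] [SFinite μ] {H H' : α × ℝ → E} {b : ℝ}
    (hderiv : ∀ a z, HasDerivAt (fun s => H (a, s)) (H' (a, z)) z)
    (hH : Integrable H (μ.prod (volume.restrict (Ioi b))))
    (hH' : Integrable H' (μ.prod (volume.restrict (Ioi b)))) :
    ∫ p, H' p ∂(μ.prod (volume.restrict (Ioi b))) = -∫ a, H (a, b) ∂μ := by
  rw [integral_prod _ hH', ← integral_neg]
  refine integral_congr_ae ?_
  filter_upwards [hH.prod_right_ae, hH'.prod_right_ae] with a ha ha'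
  have htendsto := tendsto_zero_of_hasDerivAt_of_integrableOn_Ioi (fun z _ => hderiv a z) ha' ha
  rw [integral_Ioi_of_hasDerivAt_of_tendsto' (fun z _ => hderiv a z) ha' htendsto, zero_sub]

end IntegrationByParts

section PartialDerivatives

variable {f : ℝ → ℝ → ℝ → ℝ → ℝ}

lemma hasDerivAt_pd_zero (hf : Differentiable ℝ ↿f) (x y z t : ℝ) :
    HasDerivAt (fun s => f s y z t) (pd 0 f x y z t) x :=
  (hf.comp (f := fun s : ℝ => (s, y, z, t)) (by fun_prop) x).hasDerivAt

lemma hasDerivAt_pd_one (hf : Differentiable ℝ ↿f) (x y z t : ℝ) :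
    HasDerivAt (fun s => f x s z t) (pd 1 f x y z t) y :=
  (hf.comp (f := fun s : ℝ => (x, s, z, t)) (by fun_prop) y).hasDerivAt

lemma hasDerivAt_pd_two (hf : Differentiable ℝ ↿f) (x y z t : ℝ) :
    HasDerivAt (fun s => f x y s t) (pd 2 f x y z t) z :=
  (hf.comp (f := fun s : ℝ => (x, y, s, t)) (by fun_prop) z).hasDerivAt

lemma hasDerivAt_pd_three (hf : Differentiable ℝ ↿f) (x y z t : ℝ) :
    HasDerivAt (fun s => f x y z s) (pd 3 f x y z t) t :=
  (hf.comp (f := fun s : ℝ => (x, y, z, s)) (by fun_prop) t).hasDerivAt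

/-- The standard basis of `(x, y, z, t)`-space, indexed like the partial derivatives `pd`. -/
def coordVec : Fin 4 → ℝ × ℝ × ℝ × ℝ :=
  ![(1, 0, 0, 0), (0, 1, 0, 0), (0, 0, 1, 0), (0, 0, 0, 1)]

lemma pd_eq_fderiv (hf : Differentiable ℝ ↿f) (i : Fin 4) (x y z t : ℝ) :
    pd i f x y z t = fderiv ℝ ↿f (x, y, z, t) (coordVec i) := by
  have along {c : ℝ → ℝ × ℝ × ℝ × ℝ} {e : ℝ × ℝ × ℝ × ℝ} {s : ℝ} (hc : HasDerivAt c e s) :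
      deriv (↿f ∘ c) s = fderiv ℝ ↿f (c s) e :=
    ((hf (c s)).hasFDerivAt.comp_hasDerivAt s hc).deriv
  fin_cases i
  · exact along ((hasDerivAt_id x).prodMk (hasDerivAt_const x (y, z, t)))
  · exact along ((hasDerivAt_const y x).prodMk
      ((hasDerivAt_id y).prodMk (hasDerivAt_const y (z, t))))
  · exact along ((hasDerivAt_const z x).prodMk ((hasDerivAt_const z y).prodMk
      ((hasDerivAt_id z).prodMk (hasDerivAt_const z t))))
  · exact along ((hasDerivAt_const t x).prodMk ((hasDerivAt_const t y).prodMk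
      ((hasDerivAt_const t z).prodMk (hasDerivAt_id t))))

lemma Smooth4.differentiable (hf : Smooth4 f) : Differentiable ℝ ↿f :=
  ContDiff.differentiable hf (by simp)

lemma Smooth4.pd (hf : Smooth4 f) (i : Fin 4) : Smooth4 (pd i f) := by
  have hfderiv : ContDiff ℝ (⊤ : ℕ∞) fun p => fderiv ℝ ↿f p (coordVec i) :=
    (ContDiff.fderiv_right hf (by simp)).clm_apply contDiff_const
  rwa [Smooth4, funext fun p : ℝ × ℝ × ℝ × ℝ =>
    pd_eq_fderiv hf.differentiable i p.1 p.2.1 p.2.2.1 p.2.2.2]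

end PartialDerivatives

section Decay

/-- An integrable majorant on space for fields of fast polynomial decay; being a product, it can be
integrated one variable at a time. -/
def cauchyWeight (p : ℝ × ℝ × ℝ) : ℝ :=
  (1 + p.1 ^ 2)⁻¹ * ((1 + p.2.1 ^ 2)⁻¹ * (1 + p.2.2 ^ 2)⁻¹)

/-- Domination by a multiple of `cauchyWeight` on the half-space `z ≥ 0`, uniformly for `t` in
compact time intervals. -/
def Dominated (f : ℝ → ℝ → ℝ → ℝ → ℝ) : Prop :=
  ∀ T : ℝ, 0 < T → ∃ C : ℝ, ∀ x y z t : ℝ,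
    0 ≤ z → 0 ≤ t → t ≤ T → |f x y z t| ≤ C * cauchyWeight (x, y, z)

/-- The fields to which the transforms are applied: continuous and dominated. -/
structure IsTransformable (f : ℝ → ℝ → ℝ → ℝ → ℝ) : Prop where
  continuous : Continuous ↿f
  dominated : Dominated f

/-- The fields that are transformable together with their iterated partial derivatives of order at
most `n`, those of order less than `n` being differentiable. -/
def DecayClass : ℕ → (ℝ → ℝ → ℝ → ℝ → ℝ) → Prop
  | 0, f => IsTransformable f
  | n + 1, f => IsTransformable f ∧ Differentiable ℝ ↿f ∧ ∀ i, DecayClass n (pd i f)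

variable {f g : ℝ → ℝ → ℝ → ℝ → ℝ} {n : ℕ}

lemma inv_pow_six_le_cauchyWeight {x y z : ℝ} (hz : 0 ≤ z) :
    ((1 + |x| + |y| + z) ^ 6)⁻¹ ≤ cauchyWeight (x, y, z) := by
  have one_add_sq_le {a b : ℝ} (ha : 0 ≤ a) (hb : 1 + a ≤ b) : 1 + a ^ 2 ≤ b ^ 2 := by nlinarith
  have hx : 1 + x ^ 2 ≤ (1 + |x| + |y| + z) ^ 2 :=
    sq_abs x ▸ one_add_sq_le (abs_nonneg x) (by linarith [abs_nonneg y])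
  have hy : 1 + y ^ 2 ≤ (1 + |x| + |y| + z) ^ 2 :=
    sq_abs y ▸ one_add_sq_le (abs_nonneg y) (by linarith [abs_nonneg x])
  have hz' : 1 + z ^ 2 ≤ (1 + |x| + |y| + z) ^ 2 :=
    one_add_sq_le hz (by linarith [abs_nonneg x, abs_nonneg y])
  rw [cauchyWeight, ← mul_inv, ← mul_inv]
  refine inv_anti₀ (by positivity) ?_
  calc (1 + x ^ 2) * ((1 + y ^ 2) * (1 + z ^ 2))
      ≤ (1 + |x| + |y| + z) ^ 2 * ((1 + |x| + |y| + z) ^ 2 * (1 + |x| + |y| + z) ^ 2) := by gcongr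
    _ = (1 + |x| + |y| + z) ^ 6 := by ring

lemma Decays.dominated (hf : Decays f) : Dominated f := by
  intro T hT
  obtain ⟨C, hC⟩ := hf T hT 6
  have hC_nonneg : 0 ≤ C := by
    simpa using (abs_nonneg _).trans (hC 0 0 0 0 le_rfl le_rfl hT.le)
  refine ⟨C, fun x y z t hz ht htT => (hC x y z t hz ht htT).trans ?_⟩
  rw [div_eq_mul_inv]
  exact mul_le_mul_of_nonneg_left (inv_pow_six_le_cauchyWeight hz) hC_nonneg

lemma Dominated.add (hf : Dominated f) (hg : Dominated g) : Dominated (f + g) := by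
  intro T hT
  obtain ⟨C, hC⟩ := hf T hT
  obtain ⟨D, hD⟩ := hg T hT
  refine ⟨C + D, fun x y z t hz ht htT => (abs_add_le _ _).trans ?_⟩
  rw [add_mul]
  exact add_le_add (hC x y z t hz ht htT) (hD x y z t hz ht htT)

lemma Dominated.const_smul (hf : Dominated f) (a : ℝ) : Dominated (a • f) := by
  intro T hT
  obtain ⟨C, hC⟩ := hf T hT
  refine ⟨|a| * C, fun x y z t hz ht htT => (abs_mul a _).trans_le ?_⟩
  rw [mul_assoc]
  exact mul_le_mul_of_nonneg_left (hC x y z t hz ht htT) (abs_nonneg a)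

lemma IsTransformable.add (hf : IsTransformable f) (hg : IsTransformable g) :
    IsTransformable (f + g) :=
  ⟨hf.continuous.add hg.continuous, hf.dominated.add hg.dominated⟩

lemma IsTransformable.const_smul (hf : IsTransformable f) (a : ℝ) : IsTransformable (a • f) :=
  ⟨hf.continuous.const_smul a, hf.dominated.const_smul a⟩

lemma DecayClass.isTransformable (hf : DecayClass n f) : IsTransformable f := by
  cases n with
  | zero => exact hf
  | succ n => exact hf.1

lemma DecayClass.differentiable (hf : DecayClass (n + 1) f) : Differentiable ℝ ↿f := hf.2.1

lemma DecayClass.pd (hf : DecayClass (n + 1) f) (i : Fin 4) : DecayClass n (pd i f) := hf.2.2 i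

lemma DecayClass.of_succ (hf : DecayClass (n + 1) f) : DecayClass n f := by
  induction n generalizing f with
  | zero => exact hf.isTransformable
  | succ n ih => exact ⟨hf.isTransformable, hf.differentiable, fun i => ih (hf.pd i)⟩

lemma Smooth4.decayClass_two (hf : Smooth4 f) (hd : DecaysAll f) : DecayClass 2 f := by
  have transformable {g} (hg : Smooth4 g) (hdg : Decays g) : IsTransformable g :=
    ⟨hg.differentiable.continuous, hdg.dominated⟩
  exact ⟨transformable hf hd.1, hf.differentiable, fun i =>
    ⟨transformable (hf.pd i) (hd.2.1 i), (hf.pd i).differentiable, fun j =>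
      transformable ((hf.pd i).pd j) (hd.2.2 j i)⟩⟩

end Decay

section Transform

/-- The measures in `z` for which the transform of a dominated field converges. -/
class HalfLineMeasure (ν : Measure ℝ) : Prop extends SFinite ν where
  ae_nonneg : ∀ᵐ z ∂ν, 0 ≤ z
  integrable_inv_one_add_sq : Integrable (fun z : ℝ => (1 + z ^ 2)⁻¹) ν

/-- Lebesgue measure on `(0, ∞)`, which yields the half-space transform. -/
abbrev halfLine : Measure ℝ := volume.restrict (Ioi 0)

instance : HalfLineMeasure halfLine where
  ae_nonneg := (ae_restrict_mem measurableSet_Ioi).mono fun _ hz => le_of_lt hz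
  integrable_inv_one_add_sq := integrable_inv_one_add_sq.restrict

instance : HalfLineMeasure (Measure.dirac 0) where
  ae_nonneg := by rw [ae_dirac_eq]; exact le_refl (0 : ℝ)
  integrable_inv_one_add_sq := integrable_dirac (by simp)

/-- The integrand `e^{−ikx−ily−imz} f(x, y, z, t)` of the transforms. -/
def fourierIntegrand (f : ℝ → ℝ → ℝ → ℝ → ℝ) (k l : ℝ) (m : ℂ) (t : ℝ) (p : ℝ × ℝ × ℝ) : ℂ :=
  Complex.exp (-Complex.I * ((k : ℂ) * p.1 + (l : ℂ) * p.2.1) - Complex.I * m * p.2.2) *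
    (f p.1 p.2.1 p.2.2 t : ℂ)

/-- The Fourier transform of `f(·, t)` with respect to `dx dy dν(z)`. It gives the half-space
transform `f̂` for `ν = halfLine` and the boundary transform `f̃` for the Dirac mass at `0`. -/
def layerFT (ν : Measure ℝ) (f : ℝ → ℝ → ℝ → ℝ → ℝ) (k l : ℝ) (m : ℂ) (t : ℝ) : ℂ :=
  ∫ p, fourierIntegrand f k l m t p ∂((volume : Measure ℝ).prod ((volume : Measure ℝ).prod ν))

variable {ν : Measure ℝ} {f g : ℝ → ℝ → ℝ → ℝ → ℝ} {k l : ℝ} {m : ℂ} {t : ℝ}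

lemma norm_fourierIntegrand_le (hm : m.im ≤ 0) {p : ℝ × ℝ × ℝ} (hp : 0 ≤ p.2.2) :
    ‖fourierIntegrand f k l m t p‖ ≤ |f p.1 p.2.1 p.2.2 t| := by
  rw [fourierIntegrand, norm_mul, Complex.norm_real, Real.norm_eq_abs, Complex.norm_exp]
  refine mul_le_of_le_one_left (abs_nonneg _) (Real.exp_le_one_iff.mpr ?_)
  simpa using mul_nonpos_of_nonpos_of_nonneg hm hp

lemma continuous_fourierIntegrand (hf : Continuous ↿f) :
    Continuous (fourierIntegrand f k l m t) := by
  have hslice : Continuous fun p : ℝ × ℝ × ℝ => f p.1 p.2.1 p.2.2 t :=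
    hf.comp (f := fun p : ℝ × ℝ × ℝ => (p.1, p.2.1, p.2.2, t)) (by fun_prop)
  unfold fourierIntegrand
  fun_prop

lemma ae_prod_prod_snd [SFinite ν] {P : ℝ → Prop} (hP : ∀ᵐ z ∂ν, P z) :
    ∀ᵐ p ∂((volume : Measure ℝ).prod ((volume : Measure ℝ).prod ν)), P p.2.2 :=
  Measure.quasiMeasurePreserving_snd.ae (Measure.quasiMeasurePreserving_snd.ae hP)

section Integrability

variable (ν) [HalfLineMeasure ν] (k l)

lemma integrable_cauchyWeight :
    Integrable cauchyWeight ((volume : Measure ℝ).prod ((volume : Measure ℝ).prod ν)) :=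
  integrable_inv_one_add_sq.mul_prod
    (integrable_inv_one_add_sq.mul_prod HalfLineMeasure.integrable_inv_one_add_sq)

lemma Dominated.exists_norm_fourierIntegrand_le (hf : Dominated f) (hm : m.im ≤ 0) {T : ℝ}
    (hT : 0 < T) :
    ∃ C : ℝ, ∀ᵐ p ∂((volume : Measure ℝ).prod ((volume : Measure ℝ).prod ν)),
      ∀ t ∈ Icc 0 T, ‖fourierIntegrand f k l m t p‖ ≤ C * cauchyWeight p := by
  obtain ⟨C, hC⟩ := hf T hT
  refine ⟨C, (ae_prod_prod_snd HalfLineMeasure.ae_nonneg).mono fun p hp t ht => ?_⟩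
  exact (norm_fourierIntegrand_le hm hp).trans (hC _ _ _ t hp ht.1 ht.2)

lemma IsTransformable.integrable_fourierIntegrand (hf : IsTransformable f) (hm : m.im ≤ 0)
    (ht : 0 ≤ t) :
    Integrable (fourierIntegrand f k l m t)
      ((volume : Measure ℝ).prod ((volume : Measure ℝ).prod ν)) := by
  obtain ⟨C, hC⟩ := hf.dominated.exists_norm_fourierIntegrand_le ν k l hm
    (show 0 < t + 1 by linarith)
  refine ((integrable_cauchyWeight ν).const_mul C).mono'
    (continuous_fourierIntegrand hf.continuous).aestronglyMeasurable ?_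
  exact hC.mono fun p hp => hp t ⟨ht, by linarith⟩

end Integrability

lemma layerFT_eq_integral [HalfLineMeasure ν] (hf : IsTransformable f) (hm : m.im ≤ 0)
    (ht : 0 ≤ t) :
    layerFT ν f k l m t = ∫ x, ∫ y, ∫ z, fourierIntegrand f k l m t (x, y, z) ∂ν := by
  have hint := hf.integrable_fourierIntegrand ν k l hm ht
  rw [layerFT, integral_prod _ hint]
  exact integral_congr_ae (hint.prod_right_ae.mono fun x hx => integral_prod _ hx)

lemma layerFT_add [HalfLineMeasure ν] (hf : IsTransformable f) (hg : IsTransformable g)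
    (hm : m.im ≤ 0) (ht : 0 ≤ t) :
    layerFT ν (f + g) k l m t = layerFT ν f k l m t + layerFT ν g k l m t := by
  rw [layerFT, layerFT, layerFT, ← integral_add (hf.integrable_fourierIntegrand ν k l hm ht)
    (hg.integrable_fourierIntegrand ν k l hm ht)]
  simp [fourierIntegrand, mul_add]

lemma layerFT_const_smul (a : ℝ) :
    layerFT ν (a • f) k l m t = a * layerFT ν f k l m t := by
  rw [layerFT, layerFT, ← integral_const_mul]
  simp [fourierIntegrand, mul_left_comm]

lemma layerFT_halfLine_congr (hfg : ∀ x y z, 0 < z → f x y z t = g x y z t) :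
    layerFT halfLine f k l m t = layerFT halfLine g k l m t := by
  refine integral_congr_ae ?_
  filter_upwards [ae_prod_prod_snd (ae_restrict_mem measurableSet_Ioi)] with p hp
  rw [fourierIntegrand, fourierIntegrand, hfg _ _ _ hp]

lemma FT3_eq_layerFT (hf : IsTransformable f) (hm : m.im ≤ 0) (ht : 0 ≤ t) :
    FT3 f k l m t = layerFT halfLine f k l m t := by
  simp only [layerFT_eq_integral hf hm ht, FT3, fourierIntegrand, integral_Ici_eq_integral_Ioi]

lemma FT2_eq_layerFT {b : ℝ → ℝ → ℝ → ℝ} (hf : IsTransformable f) (hm : m.im ≤ 0) (ht : 0 ≤ t)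
    (hb : ∀ x y, f x y 0 t = b x y t) :
    FT2 b k l t = layerFT (Measure.dirac 0) f k l m t := by
  simp [layerFT_eq_integral hf hm ht, FT2, fourierIntegrand, hb]

end Transform

section TransformDerivative

variable {ν : Measure ℝ} [HalfLineMeasure ν] {f g h : ℝ → ℝ → ℝ → ℝ → ℝ} {k l : ℝ} {m : ℂ} {t : ℝ}

lemma hasDerivAt_cexp_mul_ofReal {θ : ℝ → ℂ} {φ : ℝ → ℝ} {c : ℂ} {φ' s : ℝ}
    (hθ : HasDerivAt θ (-c) s) (hφ : HasDerivAt φ φ' s) :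
    HasDerivAt (fun r => Complex.exp (θ r) * (φ r : ℂ))
      (Complex.exp (θ s) * φ' - c * (Complex.exp (θ s) * φ s)) s :=
  (hθ.cexp.mul hφ.ofReal_comp).congr_deriv (by ring)

lemma hasDerivAt_fourierIntegrand_fst (hf : Differentiable ℝ ↿f) (x y z : ℝ) :
    HasDerivAt (fun s => fourierIntegrand f k l m t (s, y, z))
      (fourierIntegrand (pd 0 f) k l m t (x, y, z)
        - Complex.I * k * fourierIntegrand f k l m t (x, y, z)) x := by
  refine hasDerivAt_cexp_mul_ofReal ?_ (hasDerivAt_pd_zero hf x y z t)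
  exact (((((hasDerivAt_id x).ofReal_comp.const_mul (k : ℂ)).add_const ((l : ℂ) * y)).const_mul
    (-Complex.I)).sub_const (Complex.I * m * z)).congr_deriv (by simp)

lemma hasDerivAt_fourierIntegrand_snd (hf : Differentiable ℝ ↿f) (x y z : ℝ) :
    HasDerivAt (fun s => fourierIntegrand f k l m t (x, s, z))
      (fourierIntegrand (pd 1 f) k l m t (x, y, z)
        - Complex.I * l * fourierIntegrand f k l m t (x, y, z)) y := by
  refine hasDerivAt_cexp_mul_ofReal ?_ (hasDerivAt_pd_one hf x y z t)
  exact (((((hasDerivAt_id y).ofReal_comp.const_mul (l : ℂ)).const_add ((k : ℂ) * x)).const_mul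
    (-Complex.I)).sub_const (Complex.I * m * z)).congr_deriv (by simp)

lemma hasDerivAt_fourierIntegrand_trd (hf : Differentiable ℝ ↿f) (x y z : ℝ) :
    HasDerivAt (fun s => fourierIntegrand f k l m t (x, y, s))
      (fourierIntegrand (pd 2 f) k l m t (x, y, z)
        - Complex.I * m * fourierIntegrand f k l m t (x, y, z)) z := by
  refine hasDerivAt_cexp_mul_ofReal ?_ (hasDerivAt_pd_two hf x y z t)
  exact (((hasDerivAt_id z).ofReal_comp.const_mul (Complex.I * m)).const_sub
    (-Complex.I * ((k : ℂ) * x + (l : ℂ) * y))).congr_deriv (by simp)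

lemma integral_fourierIntegrand_sub_const_mul (hf : IsTransformable f) (hg : IsTransformable g)
    (hm : m.im ≤ 0) (ht : 0 ≤ t) (c : ℂ) :
    ∫ p, (fourierIntegrand g k l m t p - c * fourierIntegrand f k l m t p)
        ∂((volume : Measure ℝ).prod ((volume : Measure ℝ).prod ν))
      = layerFT ν g k l m t - c * layerFT ν f k l m t := by
  rw [integral_sub (hg.integrable_fourierIntegrand ν k l hm ht)
    ((hf.integrable_fourierIntegrand ν k l hm ht).const_mul c), integral_const_mul,
    layerFT, layerFT]

lemma layerFT_pd_zero (hf : DecayClass 1 f) (hm : m.im ≤ 0) (ht : 0 ≤ t) :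
    layerFT ν (pd 0 f) k l m t = Complex.I * k * layerFT ν f k l m t := by
  have hint := hf.isTransformable.integrable_fourierIntegrand ν k l hm ht
  have hint' := (hf.pd 0).isTransformable.integrable_fourierIntegrand ν k l hm ht
  rw [← sub_eq_zero, ← integral_fourierIntegrand_sub_const_mul hf.isTransformable
    (hf.pd 0).isTransformable hm ht]
  exact integral_prod_eq_zero_of_hasDerivAt_fst
    (fun x q => hasDerivAt_fourierIntegrand_fst hf.differentiable x q.1 q.2) hint
    (hint'.sub (hint.const_mul _))

lemma layerFT_pd_one (hf : DecayClass 1 f) (hm : m.im ≤ 0) (ht : 0 ≤ t) :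
    layerFT ν (pd 1 f) k l m t = Complex.I * l * layerFT ν f k l m t := by
  have hint := hf.isTransformable.integrable_fourierIntegrand ν k l hm ht
  have hint' := (hf.pd 1).isTransformable.integrable_fourierIntegrand ν k l hm ht
  rw [← sub_eq_zero, ← integral_fourierIntegrand_sub_const_mul hf.isTransformable
    (hf.pd 1).isTransformable hm ht]
  exact integral_prod_prod_eq_zero_of_hasDerivAt_mid
    (hasDerivAt_fourierIntegrand_snd hf.differentiable) hint (hint'.sub (hint.const_mul _))

lemma layerFT_halfLine_pd_two (hf : DecayClass 1 f) (hm : m.im ≤ 0) (ht : 0 ≤ t) :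
    layerFT halfLine (pd 2 f) k l m t =
      Complex.I * m * layerFT halfLine f k l m t - layerFT (Measure.dirac 0) f k l m t := by
  have hint := hf.isTransformable.integrable_fourierIntegrand halfLine k l hm ht
  have hint' := ((hf.pd 2).isTransformable.integrable_fourierIntegrand halfLine k l hm ht).sub
    (hint.const_mul (Complex.I * m))
  have hboundary : layerFT halfLine (pd 2 f) k l m t - Complex.I * m * layerFT halfLine f k l m t
      = -layerFT (Measure.dirac 0) f k l m t := by
    rw [← integral_fourierIntegrand_sub_const_mul hf.isTransformable (hf.pd 2).isTransformable
      hm ht, layerFT_eq_integral hf.isTransformable hm ht, ← integral_neg]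
    refine (integral_prod _ hint').trans (integral_congr_ae ?_)
    filter_upwards [hint.prod_right_ae, hint'.prod_right_ae] with x hx hx'
    simp only [integral_dirac]
    exact integral_prod_Ioi_of_hasDerivAt_snd
      (fun y z => hasDerivAt_fourierIntegrand_trd hf.differentiable x y z) hx hx'
  linear_combination hboundary

lemma hasDerivAt_layerFT (hf : DecayClass 1 f) (hm : m.im ≤ 0) (ht : 0 < t) :
    HasDerivAt (layerFT ν f k l m) (layerFT ν (pd 3 f) k l m t) t := by
  have hf' := (hf.pd 3).isTransformable
  obtain ⟨C, hC⟩ := hf'.dominated.exists_norm_fourierIntegrand_le ν k l hm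
    (show 0 < t + 1 by linarith)
  refine (hasDerivAt_integral_of_dominated_loc_of_deriv_le
    (F := fourierIntegrand f k l m) (F' := fourierIntegrand (pd 3 f) k l m)
    (Icc_mem_nhds ht (lt_add_one t))
    (.of_forall fun _ =>
      (continuous_fourierIntegrand hf.isTransformable.continuous).aestronglyMeasurable)
    (hf.isTransformable.integrable_fourierIntegrand ν k l hm ht.le)
    (continuous_fourierIntegrand hf'.continuous).aestronglyMeasurable
    hC ((integrable_cauchyWeight ν).const_mul C) ?_).2
  exact .of_forall fun p τ _ =>
    (hasDerivAt_pd_three hf.differentiable p.1 p.2.1 p.2.2 τ).ofReal_comp.const_mul _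

lemma hasDerivAt_FT3 (hf : DecayClass 1 f) (hm : m.im ≤ 0) (ht : 0 < t) :
    HasDerivAt (FT3 f k l m) (FT3 (pd 3 f) k l m t) t := by
  rw [FT3_eq_layerFT (hf.pd 3).isTransformable hm ht.le]
  refine (hasDerivAt_layerFT hf hm ht).congr_of_eventuallyEq ?_
  filter_upwards [Ioi_mem_nhds ht] with τ hτ
  exact FT3_eq_layerFT hf.isTransformable hm (le_of_lt hτ)

lemma hasDerivAt_FT3_combination (hf : DecayClass 1 f) (hg : DecayClass 1 g) (hh : DecayClass 1 h)
    (hm : m.im ≤ 0) (ht : 0 < t) (a b c : ℂ) :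
    HasDerivAt (fun τ => a * FT3 f k l m τ + b * FT3 g k l m τ + c * FT3 h k l m τ)
      (a * FT3 (pd 3 f) k l m t + b * FT3 (pd 3 g) k l m t + c * FT3 (pd 3 h) k l m t) t :=
  (((hasDerivAt_FT3 hf hm ht).const_mul a).add ((hasDerivAt_FT3 hg hm ht).const_mul b)).add
    ((hasDerivAt_FT3 hh hm ht).const_mul c)

lemma deriv_deriv_FT3_combination (hf : DecayClass 2 f) (hg : DecayClass 2 g)
    (hh : DecayClass 2 h) (hm : m.im ≤ 0) (ht : 0 < t) (a b c : ℂ) :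
    deriv (deriv fun τ => a * FT3 f k l m τ + b * FT3 g k l m τ + c * FT3 h k l m τ) t =
      a * FT3 (pd 3 (pd 3 f)) k l m t + b * FT3 (pd 3 (pd 3 g)) k l m t
        + c * FT3 (pd 3 (pd 3 h)) k l m t := by
  have hsecond := hasDerivAt_FT3_combination (k := k) (l := l) (hf.pd 3) (hg.pd 3) (hh.pd 3)
    hm ht a b c
  refine (hsecond.congr_of_eventuallyEq ?_).deriv
  filter_upwards [Ioi_mem_nhds ht] with τ hτ
  exact (hasDerivAt_FT3_combination hf.of_succ hg.of_succ hh.of_succ hm hτ a b c).deriv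

end TransformDerivative

section ElasticityEquations

variable {lam mu : ℝ} {u v w : ℝ → ℝ → ℝ → ℝ → ℝ} {g₁ g₂ g₃ : ℝ → ℝ → ℝ → ℝ} {k l : ℝ} {m : ℂ}
  {t : ℝ}

lemma layerFT_lameCombination {ν : Measure ℝ} [HalfLineMeasure ν]
    {f₁ f₂ f₃ f₄ f₅ : ℝ → ℝ → ℝ → ℝ → ℝ} (h₁ : IsTransformable f₁) (h₂ : IsTransformable f₂)
    (h₃ : IsTransformable f₃) (h₄ : IsTransformable f₄) (h₅ : IsTransformable f₅)
    (hm : m.im ≤ 0) (ht : 0 ≤ t) (a b c : ℝ) :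
    layerFT ν (a • f₁ + b • (f₂ + f₃) + c • (f₄ + f₅)) k l m t =
      a * layerFT ν f₁ k l m t + b * (layerFT ν f₂ k l m t + layerFT ν f₃ k l m t)
        + c * (layerFT ν f₄ k l m t + layerFT ν f₅ k l m t) := by
  have h₂₃ := (h₂.add h₃).const_smul b
  have h₄₅ := (h₄.add h₅).const_smul c
  rw [layerFT_add ((h₁.const_smul a).add h₂₃) h₄₅ hm ht, layerFT_add (h₁.const_smul a) h₂₃ hm ht,
    layerFT_const_smul, layerFT_const_smul, layerFT_const_smul, layerFT_add h₂ h₃ hm ht,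
    layerFT_add h₄ h₅ hm ht]

lemma LameNavier.layerFT_fst (hpde : LameNavier lam mu u v w) (hu : DecayClass 2 u)
    (hv : DecayClass 2 v) (hw : DecayClass 2 w) (hm : m.im ≤ 0) (ht : 0 < t) :
    layerFT halfLine (pd 3 (pd 3 u)) k l m t =
      -((lam + 2 * mu) * k ^ 2 + mu * (l ^ 2 + m ^ 2)) * layerFT halfLine u k l m t
        - (lam + mu) * k * (l * layerFT halfLine v k l m t + m * layerFT halfLine w k l m t)
        - Complex.I * (lam + mu) * k * layerFT (.dirac 0) w k l m t
        - mu * (Complex.I * m * layerFT (.dirac 0) u k l m t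
          + layerFT (.dirac 0) (pd 2 u) k l m t) := by
  have heq : layerFT halfLine (pd 3 (pd 3 u)) k l m t = layerFT halfLine
      ((lam + 2 * mu) • pd 0 (pd 0 u) + (lam + mu) • (pd 0 (pd 1 v) + pd 0 (pd 2 w))
        + mu • (pd 1 (pd 1 u) + pd 2 (pd 2 u))) k l m t :=
    layerFT_halfLine_congr fun x y z hz => (hpde x y z t hz ht).1.symm
  rw [heq, layerFT_lameCombination ((hu.pd 0).pd 0).isTransformable
    ((hv.pd 1).pd 0).isTransformable ((hw.pd 2).pd 0).isTransformable
    ((hu.pd 1).pd 1).isTransformable ((hu.pd 2).pd 2).isTransformable hm ht.le,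
    layerFT_pd_zero (hu.pd 0) hm ht.le, layerFT_pd_zero hu.of_succ hm ht.le,
    layerFT_pd_zero (hv.pd 1) hm ht.le, layerFT_pd_one hv.of_succ hm ht.le,
    layerFT_pd_zero (hw.pd 2) hm ht.le, layerFT_halfLine_pd_two hw.of_succ hm ht.le,
    layerFT_pd_one (hu.pd 1) hm ht.le, layerFT_pd_one hu.of_succ hm ht.le,
    layerFT_halfLine_pd_two (hu.pd 2) hm ht.le, layerFT_halfLine_pd_two hu.of_succ hm ht.le]
  push_cast
  ring_nf
  simp only [Complex.I_sq]
  ring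

lemma LameNavier.layerFT_snd (hpde : LameNavier lam mu u v w) (hu : DecayClass 2 u)
    (hv : DecayClass 2 v) (hw : DecayClass 2 w) (hm : m.im ≤ 0) (ht : 0 < t) :
    layerFT halfLine (pd 3 (pd 3 v)) k l m t =
      -((lam + 2 * mu) * l ^ 2 + mu * (k ^ 2 + m ^ 2)) * layerFT halfLine v k l m t
        - (lam + mu) * l * (m * layerFT halfLine w k l m t + k * layerFT halfLine u k l m t)
        - Complex.I * (lam + mu) * l * layerFT (.dirac 0) w k l m t
        - mu * (Complex.I * m * layerFT (.dirac 0) v k l m t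
          + layerFT (.dirac 0) (pd 2 v) k l m t) := by
  have heq : layerFT halfLine (pd 3 (pd 3 v)) k l m t = layerFT halfLine
      ((lam + 2 * mu) • pd 1 (pd 1 v) + (lam + mu) • (pd 1 (pd 2 w) + pd 1 (pd 0 u))
        + mu • (pd 2 (pd 2 v) + pd 0 (pd 0 v))) k l m t :=
    layerFT_halfLine_congr fun x y z hz => (hpde x y z t hz ht).2.1.symm
  rw [heq, layerFT_lameCombination ((hv.pd 1).pd 1).isTransformable
    ((hw.pd 2).pd 1).isTransformable ((hu.pd 0).pd 1).isTransformable
    ((hv.pd 2).pd 2).isTransformable ((hv.pd 0).pd 0).isTransformable hm ht.le,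
    layerFT_pd_one (hv.pd 1) hm ht.le, layerFT_pd_one hv.of_succ hm ht.le,
    layerFT_pd_one (hw.pd 2) hm ht.le, layerFT_halfLine_pd_two hw.of_succ hm ht.le,
    layerFT_pd_one (hu.pd 0) hm ht.le, layerFT_pd_zero hu.of_succ hm ht.le,
    layerFT_halfLine_pd_two (hv.pd 2) hm ht.le, layerFT_halfLine_pd_two hv.of_succ hm ht.le,
    layerFT_pd_zero (hv.pd 0) hm ht.le, layerFT_pd_zero hv.of_succ hm ht.le]
  push_cast
  ring_nf
  simp only [Complex.I_sq]
  ring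

lemma LameNavier.layerFT_trd (hpde : LameNavier lam mu u v w) (hu : DecayClass 2 u)
    (hv : DecayClass 2 v) (hw : DecayClass 2 w) (hm : m.im ≤ 0) (ht : 0 < t) :
    layerFT halfLine (pd 3 (pd 3 w)) k l m t =
      -((lam + 2 * mu) * m ^ 2 + mu * (k ^ 2 + l ^ 2)) * layerFT halfLine w k l m t
        - (lam + mu) * m * (k * layerFT halfLine u k l m t + l * layerFT halfLine v k l m t)
        - Complex.I * (lam + mu) * (k * layerFT (.dirac 0) u k l m t
          + l * layerFT (.dirac 0) v k l m t)
        - (lam + 2 * mu) * (Complex.I * m * layerFT (.dirac 0) w k l m t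
          + layerFT (.dirac 0) (pd 2 w) k l m t) := by
  have heq : layerFT halfLine (pd 3 (pd 3 w)) k l m t = layerFT halfLine
      ((lam + 2 * mu) • pd 2 (pd 2 w) + (lam + mu) • (pd 2 (pd 0 u) + pd 2 (pd 1 v))
        + mu • (pd 0 (pd 0 w) + pd 1 (pd 1 w))) k l m t :=
    layerFT_halfLine_congr fun x y z hz => (hpde x y z t hz ht).2.2.symm
  rw [heq, layerFT_lameCombination ((hw.pd 2).pd 2).isTransformable
    ((hu.pd 0).pd 2).isTransformable ((hv.pd 1).pd 2).isTransformable
    ((hw.pd 0).pd 0).isTransformable ((hw.pd 1).pd 1).isTransformable hm ht.le,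
    layerFT_halfLine_pd_two (hw.pd 2) hm ht.le, layerFT_halfLine_pd_two hw.of_succ hm ht.le,
    layerFT_halfLine_pd_two (hu.pd 0) hm ht.le, layerFT_pd_zero hu.of_succ hm ht.le,
    layerFT_pd_zero hu.of_succ hm ht.le, layerFT_halfLine_pd_two (hv.pd 1) hm ht.le,
    layerFT_pd_one hv.of_succ hm ht.le, layerFT_pd_one hv.of_succ hm ht.le,
    layerFT_pd_zero (hw.pd 0) hm ht.le, layerFT_pd_zero hw.of_succ hm ht.le,
    layerFT_pd_one (hw.pd 1) hm ht.le, layerFT_pd_one hw.of_succ hm ht.le]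
  push_cast
  ring_nf
  simp only [Complex.I_sq]
  ring

lemma StressBC.FT2_fst (hbc : StressBC lam mu u v w g₁ g₂ g₃) (hu : DecayClass 1 u)
    (hw : DecayClass 1 w) (hm : m.im ≤ 0) (ht : 0 < t) :
    FT2 g₁ k l t =
      layerFT (.dirac 0) (pd 2 u) k l m t + Complex.I * k * layerFT (.dirac 0) w k l m t := by
  have hu' := (hu.pd 2).isTransformable
  have hw' := (hw.pd 0).isTransformable
  rw [FT2_eq_layerFT (hu'.add hw') hm ht.le fun x y => (hbc x y t ht).1,
    layerFT_add hu' hw' hm ht.le, layerFT_pd_zero hw hm ht.le]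

lemma StressBC.FT2_snd (hbc : StressBC lam mu u v w g₁ g₂ g₃) (hv : DecayClass 1 v)
    (hw : DecayClass 1 w) (hm : m.im ≤ 0) (ht : 0 < t) :
    FT2 g₂ k l t =
      layerFT (.dirac 0) (pd 2 v) k l m t + Complex.I * l * layerFT (.dirac 0) w k l m t := by
  have hv' := (hv.pd 2).isTransformable
  have hw' := (hw.pd 1).isTransformable
  rw [FT2_eq_layerFT (hv'.add hw') hm ht.le fun x y => (hbc x y t ht).2.1,
    layerFT_add hv' hw' hm ht.le, layerFT_pd_one hw hm ht.le]

lemma StressBC.FT2_trd (hbc : StressBC lam mu u v w g₁ g₂ g₃) (hu : DecayClass 1 u)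
    (hv : DecayClass 1 v) (hw : DecayClass 1 w) (hm : m.im ≤ 0) (ht : 0 < t) :
    FT2 g₃ k l t = layerFT (.dirac 0) (pd 2 w) k l m t + lam / (lam + 2 * mu) *
      (Complex.I * k * layerFT (.dirac 0) u k l m t
        + Complex.I * l * layerFT (.dirac 0) v k l m t) := by
  have hu' := (hu.pd 0).isTransformable
  have hv' := (hv.pd 1).isTransformable
  have hw' := (hw.pd 2).isTransformable
  rw [FT2_eq_layerFT (hw'.add ((hu'.add hv').const_smul (lam / (lam + 2 * mu)))) hm ht.le
      fun x y => (hbc x y t ht).2.2,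
    layerFT_add hw' ((hu'.add hv').const_smul _) hm ht.le, layerFT_const_smul,
    layerFT_add hu' hv' hm ht.le, layerFT_pd_zero hu hm ht.le, layerFT_pd_one hv hm ht.le]
  push_cast
  rfl

lemma FP_eq_layerFT (hl : lam + 2 * mu ≠ 0) (hbc : StressBC lam mu u v w g₁ g₂ g₃)
    (hu : DecayClass 1 u) (hv : DecayClass 1 v) (hw : DecayClass 1 w) (hm : m.im ≤ 0)
    (ht : 0 < t) :
    FP lam mu u v w g₁ g₂ g₃ k l m t =
      -(mu * (k * layerFT (.dirac 0) (pd 2 u) k l m t + l * layerFT (.dirac 0) (pd 2 v) k l m t)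
          + (lam + 2 * mu) * m * layerFT (.dirac 0) (pd 2 w) k l m t)
        - Complex.I * (lam + 2 * mu) * m *
          (k * layerFT (.dirac 0) u k l m t + l * layerFT (.dirac 0) v k l m t)
        - Complex.I * ((lam + mu) * (k ^ 2 + l ^ 2) + (lam + 2 * mu) * m ^ 2) *
          layerFT (.dirac 0) w k l m t := by
  have hne : (lam : ℂ) + 2 * (mu : ℂ) ≠ 0 := by exact_mod_cast hl
  rw [FP, hbc.FT2_fst hu hw hm ht, hbc.FT2_snd hv hw hm ht, hbc.FT2_trd hu hv hw hm ht,
    FT2_eq_layerFT hu.isTransformable hm ht.le fun _ _ => rfl,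
    FT2_eq_layerFT hv.isTransformable hm ht.le fun _ _ => rfl,
    FT2_eq_layerFT hw.isTransformable hm ht.le fun _ _ => rfl]
  have hcancel : ((lam : ℂ) + 2 * mu) * (lam / (lam + 2 * mu)) = lam := mul_div_cancel₀ _ hne
  linear_combination -(Complex.I * m * (k * layerFT (.dirac 0) u k l m t
    + l * layerFT (.dirac 0) v k l m t)) * hcancel

end ElasticityEquations

theorem global_ODE_P_general {lam mu : ℝ} (hl : lam + 2 * mu ≠ 0)
    {u v w : ℝ → ℝ → ℝ → ℝ → ℝ} {g₁ g₂ g₃ : ℝ → ℝ → ℝ → ℝ}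
    (hu : DecayClass 2 u) (hv : DecayClass 2 v) (hw : DecayClass 2 w)
    (hpde : LameNavier lam mu u v w) (hbc : StressBC lam mu u v w g₁ g₂ g₃)
    (k l : ℝ) {m : ℂ} (hm : m.im ≤ 0) {t : ℝ} (ht : 0 < t) :
    deriv (deriv fun τ => k * FT3 u k l m τ + l * FT3 v k l m τ + m * FT3 w k l m τ) t
      + (lam + 2 * mu) * (k ^ 2 + l ^ 2 + m ^ 2) *
        (k * FT3 u k l m t + l * FT3 v k l m t + m * FT3 w k l m t)
      = FP lam mu u v w g₁ g₂ g₃ k l m t := by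
  have toLayer {n f} (hf : DecayClass n f) : FT3 f k l m t = layerFT halfLine f k l m t :=
    FT3_eq_layerFT hf.isTransformable hm ht.le
  rw [deriv_deriv_FT3_combination hu hv hw hm ht, toLayer hu, toLayer hv, toLayer hw,
    toLayer ((hu.pd 3).pd 3), toLayer ((hv.pd 3).pd 3), toLayer ((hw.pd 3).pd 3),
    FP_eq_layerFT hl hbc hu.of_succ hv.of_succ hw.of_succ hm ht]
  have hfst := hpde.layerFT_fst (k := k) (l := l) hu hv hw hm ht
  have hsnd := hpde.layerFT_snd (k := k) (l := l) hu hv hw hm ht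
  have htrd := hpde.layerFT_trd (k := k) (l := l) hu hv hw hm ht
  linear_combination k * hfst + l * hsnd + m * htrd

/-- under the Lamé–Navier equations, decay, and the stress boundary conditions,
the combination `P = kû + lv̂ + mŵ` of the half-space Fourier transforms satisfies the ODE
`∂²ₜP + (λ+2μ)(k²+l²+m²)P = F_P` for all `k, l ∈ ℝ`, `Im m ≤ 0`, `t > 0`. -/
theorem global_ODE_P (lam mu : ℝ) (hmu : 0 < mu) (hl : 0 < lam + 2 * mu)
    (u v w : ℝ → ℝ → ℝ → ℝ → ℝ) (g₁ g₂ g₃ : ℝ → ℝ → ℝ → ℝ)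
    (hsu : Smooth4 u) (hsv : Smooth4 v) (hsw : Smooth4 w)
    (hpde : LameNavier lam mu u v w)
    (hdu : DecaysAll u) (hdv : DecaysAll v) (hdw : DecaysAll w)
    (hg₁ : Continuous fun p : ℝ × ℝ × ℝ => g₁ p.1 p.2.1 p.2.2)
    (hg₂ : Continuous fun p : ℝ × ℝ × ℝ => g₂ p.1 p.2.1 p.2.2)
    (hg₃ : Continuous fun p : ℝ × ℝ × ℝ => g₃ p.1 p.2.1 p.2.2)
    (hbc : StressBC lam mu u v w g₁ g₂ g₃) :
    ∀ (k l : ℝ) (m : ℂ), m.im ≤ 0 → ∀ t : ℝ, 0 < t →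
      deriv (deriv (fun τ : ℝ =>
          (k : ℂ) * FT3 u k l m τ + (l : ℂ) * FT3 v k l m τ + m * FT3 w k l m τ)) t
        + ((lam : ℂ) + 2 * (mu : ℂ)) * ((k : ℂ) ^ 2 + (l : ℂ) ^ 2 + m ^ 2) *
            ((k : ℂ) * FT3 u k l m t + (l : ℂ) * FT3 v k l m t + m * FT3 w k l m t)
        = FP lam mu u v w g₁ g₂ g₃ k l m t := by
  intro k l m hm t ht
  exact global_ODE_P_general hl.ne' (hsu.decayClass_two hdu) (hsv.decayClass_two hdv)
    (hsw.decayClass_two hdw) hpde hbc k l hm ht
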